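/- Let 𝔑_2 = ({0,1,2}; C_3, N, B_2) and let 𝔄 be the structure with domain {0,1,2}^4 (coordinates indexed 0,1,2,3) and relations C_3^A := {(x,y) : (x_0,y_0) ∈ C_3, x_1=y_2, x_2=y_3, x_3=y_1}, N^A := {(x,y) : x_3=0, x_0=x_2, (x_1,x_2) ∈ B_2, (x_1,y_1) ∈ ≤_2, (y_2,x_2) ∈ ≤_2, (y_3,x_0) ∈ ≤_2}, and B_2^A := {(x,y) : (x_0,y_0) ∈ B_2, x_0=x_2, y_0=y_2, x_3=y_3=0}. Then the map g with g(0)=(0,1,0,0), g(1)=(1,0,1,0), g(2)=(2,0,0,1) is a homomorphism from 𝔑_2 to 𝔄, and the map h with h(x_0,x_1,x_2,x_3)=0 if (x_1,x_2,x_3)∈{(1,0,0),(1,0,1)}, =1 if (x_1,x_2,x_3)∈{(0,1,0),(1,1,0)}, =2 if (x_1,x_2,x_3)∈{(0,0,1),(0,1,1)}, =x_0 otherwise, is a homomorphism from 𝔄 to 𝔑_2. -/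

import Mathlib

/-- The three-element domain `{0,1,2}`. -/
abbrev D3 : Type := Fin 3

/-- `C₃ = {(0,1),(1,2),(2,0)}`. -/
def C3P (a b : D3) : Prop := (a = 0 ∧ b = 1) ∨ (a = 1 ∧ b = 2) ∨ (a = 2 ∧ b = 0)

/-- `N = {(0,0),(1,0),(1,1),(1,2)}`. -/
def NP (a b : D3) : Prop :=
  (a = 0 ∧ b = 0) ∨ (a = 1 ∧ b = 0) ∨ (a = 1 ∧ b = 1) ∨ (a = 1 ∧ b = 2)

/-- `B₂ = {(1,0),(0,1),(1,1)}`. -/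
def B2P (a b : D3) : Prop := (a = 1 ∧ b = 0) ∨ (a = 0 ∧ b = 1) ∨ (a = 1 ∧ b = 1)

/-- `≤₂ = {(0,0),(0,1),(1,1)}`. -/
def le2P (a b : D3) : Prop := (a = 0 ∧ b = 0) ∨ (a = 0 ∧ b = 1) ∨ (a = 1 ∧ b = 1)

/-- The relation `C₃^𝔄` on `{0,1,2}⁴`. -/
def C3A (x y : Fin 4 → D3) : Prop :=
  C3P (x 0) (y 0) ∧ x 1 = y 2 ∧ x 2 = y 3 ∧ x 3 = y 1

/-- The relation `N^𝔄` on `{0,1,2}⁴`. -/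
def NA (x y : Fin 4 → D3) : Prop :=
  x 3 = 0 ∧ x 0 = x 2 ∧ B2P (x 1) (x 2) ∧
  le2P (x 1) (y 1) ∧ le2P (y 2) (x 2) ∧ le2P (y 3) (x 0)

/-- The relation `B₂^𝔄` on `{0,1,2}⁴`. -/
def B2A (x y : Fin 4 → D3) : Prop :=
  B2P (x 0) (y 0) ∧ x 0 = x 2 ∧ y 0 = y 2 ∧ x 3 = 0 ∧ y 3 = 0

/-- The map `g` with `g(0) = (0,1,0,0)`, `g(1) = (1,0,1,0)`, `g(2) = (2,0,0,1)`. -/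
def gMap : D3 → Fin 4 → D3 := ![![0,1,0,0], ![1,0,1,0], ![2,0,0,1]]

/-- The map `h`. -/
def hMap (x : Fin 4 → D3) : D3 :=
  if (x 1, x 2, x 3) = ((1 : D3), (0 : D3), (0 : D3)) ∨
     (x 1, x 2, x 3) = ((1 : D3), (0 : D3), (1 : D3)) then 0
  else if (x 1, x 2, x 3) = ((0 : D3), (1 : D3), (0 : D3)) ∨
          (x 1, x 2, x 3) = ((1 : D3), (1 : D3), (0 : D3)) then 1
  else if (x 1, x 2, x 3) = ((0 : D3), (0 : D3), (1 : D3)) ∨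
          (x 1, x 2, x 3) = ((0 : D3), (1 : D3), (1 : D3)) then 2
  else x 0

/-!
Write the last three coordinates `(x₁, x₂, x₃)` of `x ∈ {0,1,2}⁴` as a vector on a 3-cycle. A
non-constant 0/1 vector on a 3-cycle has exactly one position where a `1` is followed by a `0`, and
`h x` is this position; when the vector is constant or has an entry `2`, `h x` falls back to `x₀`.
An edge of `C₃^𝔄` rotates the vector and moves `x₀` one step, so it moves `h` one step as well.
Whenever `x₀ = x₂` and `x₃ = 0`, the position and the fallback agree and `h x = x₀`; this settles
`B₂^𝔄`, and for `N^𝔄` it leaves only the case `x₂ = 0`, which forces `(y₁, y₂, y₃) = (1, 0, 0)`.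
-/

/-- `IsDescent c i` says that the cyclic vector `c` is Boolean (has entries in `{0,1}`) and drops
from `1` to `0` at position `i`. For `c = Fin.tail x` the descent is the value of `hMap x`; since
`Fin.tail x i = x i.succ`, position `i` refers to the coordinate `i + 1` of `x`. -/
def IsDescent {n : ℕ} [NeZero n] (c : Fin n → D3) (i : Fin n) : Prop :=
  (∀ j, c j ≠ 2) ∧ c i = 1 ∧ c (i + 1) = 0

theorem isDescent_comp_add_one {n : ℕ} [NeZero n] {c : Fin n → D3} {i : Fin n} :
    IsDescent (c ∘ (· + 1)) i ↔ IsDescent c (i + 1) := by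
  have hBoolean : (∀ j, c (j + 1) ≠ 2) ↔ ∀ j, c j ≠ 2 :=
    (Equiv.addRight (1 : Fin n)).forall_congr_left.trans (by simp)
  simp only [IsDescent, Function.comp_apply, hBoolean]

section ThreeCycle

variable {c : Fin 3 → D3} {i j : Fin 3}

theorem isDescent_zero_iff :
    IsDescent c 0 ↔ (c 0, c 1, c 2) = (1, 0, 0) ∨ (c 0, c 1, c 2) = (1, 0, 1) := by
  unfold IsDescent; decide +revert

theorem isDescent_one_iff :
    IsDescent c 1 ↔ (c 0, c 1, c 2) = (0, 1, 0) ∨ (c 0, c 1, c 2) = (1, 1, 0) := by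
  unfold IsDescent; decide +revert

theorem isDescent_two_iff :
    IsDescent c 2 ↔ (c 0, c 1, c 2) = (0, 0, 1) ∨ (c 0, c 1, c 2) = (0, 1, 1) := by
  unfold IsDescent; decide +revert

theorem IsDescent.eq (hi : IsDescent c i) (hj : IsDescent c j) : i = j := by
  by_contra hij
  obtain rfl | rfl : j = i + 1 ∨ i = j + 1 := by clear hi hj; decide +revert
  · exact zero_ne_one (hi.2.2.symm.trans hj.2.1)
  · exact zero_ne_one (hj.2.2.symm.trans hi.2.1)

end ThreeCycle

section Relations

variable {a b : D3}

theorem c3P_iff_eq_add_one : C3P a b ↔ b = a + 1 := by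
  unfold C3P; decide +revert

theorem nP_iff : NP a b ↔ a = 1 ∨ a = 0 ∧ b = 0 := by
  unfold NP; decide +revert

theorem B2P.ne_two (h : B2P a b) : a ≠ 2 ∧ b ≠ 2 := by
  unfold B2P at h; decide +revert

theorem B2P.right_eq_one_or (h : B2P a b) : b = 1 ∨ a = 1 ∧ b = 0 := by
  unfold B2P at h; decide +revert

theorem le2P_zero_left_iff : le2P 0 b ↔ b ≠ 2 := by
  unfold le2P; decide +revert

theorem le2P_one_left_iff : le2P 1 b ↔ b = 1 := by
  unfold le2P; decide +revert

theorem le2P_zero_right_iff : le2P a 0 ↔ a = 0 := by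
  unfold le2P; decide +revert

theorem le2P_one_right_iff : le2P a 1 ↔ a ≠ 2 := by
  unfold le2P; decide +revert

theorem c3A_iff {x y : Fin 4 → D3} :
    C3A x y ↔ y 0 = x 0 + 1 ∧ Fin.tail y ∘ (· + 1) = Fin.tail x := by
  have hrotate : Fin.tail y ∘ (· + 1) = Fin.tail x ↔ x 1 = y 2 ∧ x 2 = y 3 ∧ x 3 = y 1 := by
    simp [funext_iff, Fin.forall_fin_succ, Fin.tail, eq_comm (a := y _)]
  rw [C3A, c3P_iff_eq_add_one, hrotate]

end Relations

section GMap

variable {a b : D3}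

theorem gMap_zero (a : D3) : gMap a 0 = a := by
  decide +revert

theorem tail_gMap (a : D3) : Fin.tail (gMap a) = Pi.single a 1 := by
  decide +revert

theorem gMap_succ_ne_two (a i : D3) : gMap a i.succ ≠ 2 := by
  decide +revert

theorem gMap_two_of_ne_two (ha : a ≠ 2) : gMap a 2 = a := by
  decide +revert

theorem gMap_three_of_ne_two (ha : a ≠ 2) : gMap a 3 = 0 := by
  decide +revert

theorem C3P.c3A_gMap (h : C3P a b) : C3A (gMap a) (gMap b) := by
  obtain rfl := c3P_iff_eq_add_one.1 h
  refine c3A_iff.2 ⟨by simp only [gMap_zero], ?_⟩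
  ext1 i
  simp only [tail_gMap, Function.comp_apply, Pi.single_apply, add_left_inj]

theorem NP.nA_gMap (h : NP a b) : NA (gMap a) (gMap b) := by
  obtain rfl | ⟨rfl, rfl⟩ := nP_iff.1 h
  · exact ⟨rfl, rfl, .inr (.inl ⟨rfl, rfl⟩), le2P_zero_left_iff.2 (gMap_succ_ne_two b 0),
      le2P_one_right_iff.2 (gMap_succ_ne_two b 1), le2P_one_right_iff.2 (gMap_succ_ne_two b 2)⟩
  · exact ⟨rfl, rfl, .inl ⟨rfl, rfl⟩, le2P_one_left_iff.2 rfl, le2P_zero_right_iff.2 rfl,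
      le2P_zero_right_iff.2 rfl⟩

theorem B2P.b2A_gMap (h : B2P a b) : B2A (gMap a) (gMap b) := by
  obtain ⟨ha, hb⟩ := h.ne_two
  simpa only [B2A, gMap_zero, gMap_two_of_ne_two, gMap_three_of_ne_two, ha, hb, ne_eq,
    not_false_eq_true, and_true] using h

end GMap

section HMap

variable {x y : Fin 4 → D3}

theorem isDescent_hMap_or (x : Fin 4 → D3) :
    IsDescent (Fin.tail x) (hMap x) ∨ (∀ i, ¬ IsDescent (Fin.tail x) i) ∧ hMap x = x 0 := by
  unfold hMap
  split_ifs with h0 h1 h2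
  · exact .inl (isDescent_zero_iff.2 h0)
  · exact .inl (isDescent_one_iff.2 h1)
  · exact .inl (isDescent_two_iff.2 h2)
  · refine .inr ⟨fun i ↦ ?_, rfl⟩
    fin_cases i
    exacts [mt isDescent_zero_iff.1 h0, mt isDescent_one_iff.1 h1, mt isDescent_two_iff.1 h2]

theorem hMap_eq_of_isDescent {i : D3} (hi : IsDescent (Fin.tail x) i) : hMap x = i :=
  (isDescent_hMap_or x).elim (fun h ↦ h.eq hi) fun h ↦ absurd hi (h.1 i)

theorem hMap_eq_apply_zero_of_not_isDescent (h : ∀ i, ¬ IsDescent (Fin.tail x) i) : hMap x = x 0 :=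
  (isDescent_hMap_or x).elim (fun hx ↦ absurd hx (h _)) And.right

theorem hMap_eq_apply_zero_of_eq (h02 : x 0 = x 2) (h3 : x 3 = 0) : hMap x = x 0 := by
  obtain ⟨-, hone, hzero⟩ | ⟨-, hx⟩ := isDescent_hMap_or x
  · generalize hMap x = i at hone hzero ⊢
    fin_cases i
    · exact (h02.trans hzero).symm
    · exact (h02.trans hone).symm
    · exact absurd (h3.symm.trans hone) zero_ne_one
  · exact hx

theorem C3A.c3P_hMap (h : C3A x y) : C3P (hMap x) (hMap y) := by
  obtain ⟨hhead, htail⟩ := c3A_iff.1 h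
  have hdescent (i : D3) : IsDescent (Fin.tail x) i ↔ IsDescent (Fin.tail y) (i + 1) := by
    rw [← htail, isDescent_comp_add_one]
  rw [c3P_iff_eq_add_one]
  by_cases hx : ∃ i, IsDescent (Fin.tail x) i
  · obtain ⟨i, hi⟩ := hx
    rw [hMap_eq_of_isDescent hi, hMap_eq_of_isDescent ((hdescent i).1 hi)]
  · have hx' := not_exists.1 hx
    have hy (i : D3) : ¬ IsDescent (Fin.tail y) i := by
      simpa only [hdescent, sub_add_cancel] using hx' (i - 1)
    rw [hMap_eq_apply_zero_of_not_isDescent hx', hMap_eq_apply_zero_of_not_isDescent hy, hhead]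

theorem NA.nP_hMap (h : NA x y) : NP (hMap x) (hMap y) := by
  obtain ⟨hx3, hx02, hB, hy1, hy2, hy3⟩ := h
  rw [nP_iff, hMap_eq_apply_zero_of_eq hx02 hx3, hx02]
  refine hB.right_eq_one_or.imp_right fun ⟨hx1, hx2⟩ ↦ ⟨hx2, ?_⟩
  rw [hx1, le2P_one_left_iff] at hy1
  rw [hx2, le2P_zero_right_iff] at hy2
  rw [hx02, hx2, le2P_zero_right_iff] at hy3
  refine hMap_eq_of_isDescent (isDescent_zero_iff.2 (.inl ?_))
  exact Prod.ext hy1 (Prod.ext hy2 hy3)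

theorem B2A.b2P_hMap (h : B2A x y) : B2P (hMap x) (hMap y) := by
  obtain ⟨hB, hx02, hy02, hx3, hy3⟩ := h
  rwa [hMap_eq_apply_zero_of_eq hx02 hx3, hMap_eq_apply_zero_of_eq hy02 hy3]

end HMap

/-- `g` is a homomorphism from `𝔑₂ = ({0,1,2}; C₃, N, B₂)` to `𝔄`, and
`h` is a homomorphism from `𝔄` to `𝔑₂`. -/
theorem stmt6 :
    ((∀ a b : D3, C3P a b → C3A (gMap a) (gMap b)) ∧
     (∀ a b : D3, NP a b → NA (gMap a) (gMap b)) ∧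
     (∀ a b : D3, B2P a b → B2A (gMap a) (gMap b))) ∧
    ((∀ x y : Fin 4 → D3, C3A x y → C3P (hMap x) (hMap y)) ∧
     (∀ x y : Fin 4 → D3, NA x y → NP (hMap x) (hMap y)) ∧
     (∀ x y : Fin 4 → D3, B2A x y → B2P (hMap x) (hMap y))) := by
  exact ⟨⟨fun _ _ ↦ C3P.c3A_gMap, fun _ _ ↦ NP.nA_gMap, fun _ _ ↦ B2P.b2A_gMap⟩,
    fun _ _ ↦ C3A.c3P_hMap, fun _ _ ↦ NA.nP_hMap, fun _ _ ↦ B2A.b2P_hMap⟩
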